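/- For every gain G > 1 and thermal photon number N_B ≥ 0, the quantity e_amp(N_B, G, σ) tends to 0 as σ → 0⁺. (Since e_amp(N_B, G, σ) is a uniform upper bound, holding for all input states, on the sine distance between the amplifier channel A_{G,N_B} and its teleportation simulation A_{G, N_B + Gσ/(G−1)}, this establishes that the teleportation simulation of the amplifier channel converges uniformly to the amplifier channel in the limit of ideal squeezing and detection.) -/

import Mathlib

open Filter Topology

/-- The uniform bound `e_amp(N_B, G, σ)` on the sine distance between the amplifier channel
`A_{G,N_B}` and its teleportation simulation `A_{G,N_B''}`, where
`N_B'' = N_B + Gσ/(G−1)`: the sine distance between the thermal environment states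
`θ(N_B)` and `θ(N_B'')`. -/
noncomputable def eAmp (NB G σ : ℝ) : ℝ :=
  Real.sqrt (1 -
    (Real.sqrt ((NB + 1) * ((NB + G * σ / (G - 1)) + 1)) -
      Real.sqrt (NB * (NB + G * σ / (G - 1)))) ^ (-2 : ℤ))

/-!
The fidelity `F` of two thermal states with photon numbers `m ≤ n` satisfies
`1/√F = √((m + 1) * (n + 1)) - √(m * n) ≤ √(1 + (n - m))`, so that `1 - F ≤ n - m`. (With
`m = sinh² a` and `n = sinh² b` this reads `cosh² (b - a) ≤ 1 + sinh² b - sinh² a`.) Teleportation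
noise raises the photon number of the environment by `G * σ / (G - 1)`, hence
`eAmp NB G σ ≤ √(G * σ / (G - 1))`, uniformly in `NB`.
-/

/-- The fidelity `F` between the single-mode thermal states `θ(m)` and `θ(n)` with mean photon
numbers `m` and `n`, given by its closed form and normalised so that the sine distance
is `√(1 - F)`. -/
noncomputable def thermalFidelity (m n : ℝ) : ℝ :=
  (√((m + 1) * (n + 1)) - √(m * n)) ^ (-2 : ℤ)

theorem sqrt_mul_lt_sqrt_add_one_mul_add_one {m n : ℝ} (hm : 0 ≤ m) (hn : 0 ≤ n) :
    √(m * n) < √((m + 1) * (n + 1)) :=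
  Real.sqrt_lt_sqrt (mul_nonneg hm hn) (by linarith)

theorem sqrt_add_one_mul_add_one_le {m n : ℝ} (hm : 0 ≤ m) (hmn : m ≤ n) :
    √((m + 1) * (n + 1)) ≤ √(m * n) + √(1 + (n - m)) := by
  have hmn_nonneg : 0 ≤ m * n := mul_nonneg hm (hm.trans hmn)
  have hgap : 0 ≤ 1 + (n - m) := by linarith
  have le_cross : m ≤ √(m * n) * √(1 + (n - m)) :=
    calc
      m = √(m * m) * 1 := by rw [Real.sqrt_mul_self hm, mul_one]
      _ ≤ √(m * n) * √(1 + (n - m)) := by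
        gcongr
        exact Real.one_le_sqrt.mpr (by linarith)
  refine Real.sqrt_le_iff.mpr ⟨by positivity, ?_⟩
  calc
    (m + 1) * (n + 1) = m * n + 2 * m + (1 + (n - m)) := by ring
    _ ≤ m * n + 2 * (√(m * n) * √(1 + (n - m))) + (1 + (n - m)) := by gcongr
    _ = (√(m * n) + √(1 + (n - m))) ^ 2 := by
      rw [add_sq, Real.sq_sqrt hmn_nonneg, Real.sq_sqrt hgap, mul_assoc]

theorem inv_one_add_sub_le_thermalFidelity {m n : ℝ} (hm : 0 ≤ m) (hmn : m ≤ n) :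
    (1 + (n - m))⁻¹ ≤ thermalFidelity m n := by
  have hpos : 0 < √((m + 1) * (n + 1)) - √(m * n) :=
    sub_pos.mpr (sqrt_mul_lt_sqrt_add_one_mul_add_one hm (hm.trans hmn))
  have hsq : (√((m + 1) * (n + 1)) - √(m * n)) ^ 2 ≤ 1 + (n - m) :=
    (Real.le_sqrt' hpos).mp (sub_le_iff_le_add'.mpr (sqrt_add_one_mul_add_one_le hm hmn))
  calc
    (1 + (n - m))⁻¹ ≤ ((√((m + 1) * (n + 1)) - √(m * n)) ^ 2)⁻¹ :=
      inv_anti₀ (pow_pos hpos 2) hsq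
    _ = thermalFidelity m n := (zpow_neg_coe_of_pos _ two_pos).symm

theorem one_sub_thermalFidelity_le {m n : ℝ} (hm : 0 ≤ m) (hmn : m ≤ n) :
    1 - thermalFidelity m n ≤ n - m := by
  have htangent : 1 - (n - m) ≤ (1 + (n - m))⁻¹ := by
    rw [← one_div, le_div_iff₀ (by linarith)]
    linarith [sq_nonneg (n - m)]
  linarith [inv_one_add_sub_le_thermalFidelity hm hmn]

theorem eAmp_eq_sqrt_one_sub_thermalFidelity (NB G σ : ℝ) :
    eAmp NB G σ = √(1 - thermalFidelity NB (NB + G * σ / (G - 1))) :=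
  rfl

theorem eAmp_le_sqrt {NB G σ : ℝ} (hNB : 0 ≤ NB) (hG : 1 < G) (hσ : 0 ≤ σ) :
    eAmp NB G σ ≤ √(G * σ / (G - 1)) := by
  have hnoise : 0 ≤ G * σ / (G - 1) :=
    div_nonneg (mul_nonneg (by linarith) hσ) (by linarith)
  rw [eAmp_eq_sqrt_one_sub_thermalFidelity]
  gcongr
  simpa only [add_sub_cancel_left] using
    one_sub_thermalFidelity_le hNB (le_add_of_nonneg_right hnoise)

/-- For every gain `G > 1` and thermal photon number `N_B ≥ 0`, `e_amp(N_B, G, σ) → 0` as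
`σ → 0⁺`: the teleportation simulation of the amplifier channel converges uniformly to
the amplifier channel. -/
theorem amplifier_channel_uniform_convergence (G NB : ℝ) (hG : 1 < G) (hNB : 0 ≤ NB) :
    Tendsto (fun σ : ℝ => eAmp NB G σ) (𝓝[>] 0) (𝓝 0) := by
  have hbound : Tendsto (fun σ : ℝ => √(G * σ / (G - 1))) (𝓝[>] 0) (𝓝 0) := by
    have hcont : Continuous fun σ : ℝ => √(G * σ / (G - 1)) := by fun_prop
    exact (hcont.tendsto' 0 0 (by simp)).mono_left nhdsWithin_le_nhds
  refine squeeze_zero' (Eventually.of_forall fun σ => Real.sqrt_nonneg _) ?_ hbound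
  filter_upwards [self_mem_nhdsWithin] with σ hσ
  exact eAmp_le_sqrt hNB hG (le_of_lt hσ)
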